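/- arXiv:2603.17581 — 4 statements merged into one kernel-verified Lean document; each statement's English description precedes it below -/
import Mathlib

section
/- Suppose the dual numbers ℝ[ε] (ε² = 0) carry a linear order making them an ordered ring, which extends the standard order of ℝ (i.e. for real a, b, the embedded elements satisfy a ≤ b in ℝ[ε] iff a ≤ b in ℝ), and suppose ε > 0. Then the order is the lexicographic order: a₁ + b₁ε ≤ a₂ + b₂ε if and only if a₁ < a₂, or (a₁ = a₂ and b₁ ≤ b₂). -/
open DualNumber TrivSqZeroExt

/-!
Multiplication by an infinitesimal `e ≥ 0` keeps only the significant part: `(r + m) * e = r • e`.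
As multiplication by `e` preserves `≤`, so does taking significant parts, provided `r ↦ r • e` is
injective. In a linear order, a strict inequality between significant parts therefore decides the
comparison; equal significant parts leave the comparison to the infinitesimal parts.
-/

theorem isOrderedRing_of_add_le_add_of_mul_nonneg {A : Type*} [Ring A] [LinearOrder A]
    (h_add : ∀ a b c : A, a ≤ b → a + c ≤ b + c)
    (h_mul : ∀ a b : A, 0 ≤ a → 0 ≤ b → 0 ≤ a * b) : IsOrderedRing A := by
  have : IsOrderedAddMonoid A := { add_le_add_left a b hab c := h_add a b c hab }
  have : ZeroLEOneClass A := ⟨(le_total 0 1).elim id fun h ↦ by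
    simpa using h_mul (-1) (-1) (neg_nonneg.2 h) (neg_nonneg.2 h)⟩
  exact .of_mul_nonneg h_mul

section

variable {R M : Type*} [Semiring R] [AddCommMonoid M] [Module R M] [Module Rᵐᵒᵖ M] {e : M}

theorem monotone_inr_smul [Preorder R] [Preorder (TrivSqZeroExt R M)]
    [MulPosMono (TrivSqZeroExt R M)] (h_inl : Monotone (inl : R → TrivSqZeroExt R M))
    (he : (0 : TrivSqZeroExt R M) ≤ inr e) :
    Monotone fun r : R ↦ (inr (r • e) : TrivSqZeroExt R M) := by
  intro r s hrs
  simpa only [inl_mul_inr] using mul_le_mul_of_nonneg_right (h_inl hrs) he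

theorem monotone_trivSqZeroExt_fst [LinearOrder R] [PartialOrder (TrivSqZeroExt R M)]
    [MulPosMono (TrivSqZeroExt R M)] (h_inl : Monotone (inl : R → TrivSqZeroExt R M))
    (he : (0 : TrivSqZeroExt R M) ≤ inr e) (h_inj : Function.Injective fun r : R ↦ r • e) :
    Monotone (fst : TrivSqZeroExt R M → R) := by
  intro x y hxy
  have h_strict : StrictMono fun r : R ↦ (inr (r • e) : TrivSqZeroExt R M) :=
    (monotone_inr_smul h_inl he).strictMono_of_injective (inr_injective.comp h_inj)
  have mul_inr_eq (z : TrivSqZeroExt R M) : z * inr e = inr (z.fst • e) := by ext <;> simp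
  have h_mul : x * inr e ≤ y * inr e := mul_le_mul_of_nonneg_right hxy he
  rw [mul_inr_eq, mul_inr_eq] at h_mul
  exact h_strict.le_iff_le.1 h_mul

theorem strictMono_inl_add_inr [LinearOrder R] [PartialOrder M] [LinearOrder (TrivSqZeroExt R M)]
    [IsOrderedAddMonoid (TrivSqZeroExt R M)] [MulPosMono (TrivSqZeroExt R M)]
    (h_inl : Monotone (inl : R → TrivSqZeroExt R M))
    (h_inr : Monotone (inr : M → TrivSqZeroExt R M)) (he : (0 : TrivSqZeroExt R M) ≤ inr e)
    (h_inj : Function.Injective fun r : R ↦ r • e) :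
    StrictMono fun p : R ×ₗ M ↦
      (inl (ofLex p).1 + inr (ofLex p).2 : TrivSqZeroExt R M) := by
  intro p q hpq
  obtain h_fst | ⟨h_fst, h_snd⟩ := Prod.Lex.lt_iff.1 hpq
  · refine lt_of_not_ge fun h_le ↦ h_fst.not_ge ?_
    simpa using monotone_trivSqZeroExt_fst h_inl he h_inj h_le
  · have h_ne : (inl (ofLex p).1 + inr (ofLex p).2 : TrivSqZeroExt R M) ≠
        inl (ofLex q).1 + inr (ofLex q).2 :=
      fun h ↦ h_snd.ne (by simpa using congrArg snd h)
    exact (add_le_add (h_inl h_fst.le) (h_inr h_snd.le)).lt_of_ne h_ne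

end

theorem dual_order_unique_general {R : Type*} [Semiring R] [LinearOrder R] [LinearOrder R[ε]]
    [IsOrderedRing R[ε]] (h_inl : Monotone (inl : R → R[ε])) (h_eps : (0 : R[ε]) ≤ ε)
    (a₁ b₁ a₂ b₂ : R) :
    (inl a₁ + b₁ • ε : R[ε]) ≤ inl a₂ + b₂ • ε ↔ a₁ < a₂ ∨ (a₁ = a₂ ∧ b₁ ≤ b₂) := by
  have h_inr : Monotone (inr : R → R[ε]) := by
    simpa only [smul_eq_mul, mul_one] using monotone_inr_smul h_inl h_eps
  have h_inj : Function.Injective fun r : R ↦ r • (1 : R) :=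
    fun r s h ↦ by simpa only [smul_eq_mul, mul_one] using h
  have h_strict := strictMono_inl_add_inr h_inl h_inr h_eps h_inj
  simpa only [inr_eq_smul_eps, ofLex_toLex, Prod.Lex.toLex_le_toLex] using
    h_strict.le_iff_le (a := toLex (a₁, b₁)) (b := toLex (a₂, b₂))

/-- **Uniqueness of the order on the dual numbers.**
If the dual numbers `ℝ[ε]` carry a linear order which is translation invariant,
satisfies that products of nonnegative elements are nonnegative, extends the
standard order of `ℝ`, and makes `ε` positive, then the order is the
lexicographic one: `a₁ + b₁ε ≤ a₂ + b₂ε` iff `a₁ < a₂`, or `a₁ = a₂` and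
`b₁ ≤ b₂`. -/
theorem dual_order_unique (L : LinearOrder (ℝ[ε]))
    (h_add : ∀ a b c : ℝ[ε], L.le a b → L.le (a + c) (b + c))
    (h_mul : ∀ a b : ℝ[ε], L.le 0 a → L.le 0 b → L.le 0 (a * b))
    (h_ext : ∀ a b : ℝ, (L.le (inl a) (inl b) ↔ a ≤ b))
    (h_eps : L.lt 0 ε) :
    ∀ a₁ b₁ a₂ b₂ : ℝ,
      L.le (inl a₁ + b₁ • ε) (inl a₂ + b₂ • ε) ↔
        a₁ < a₂ ∨ (a₁ = a₂ ∧ b₁ ≤ b₂) := by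
  have := isOrderedRing_of_add_le_add_of_mul_nonneg h_add h_mul
  exact dual_order_unique_general (fun a b ↦ (h_ext a b).2) h_eps.le
end

section
/- A square matrix M over the dual-complex numbers satisfies Mᴴ·M = I (dual-complex unitarity, with ᴴ the conjugate transpose using the star (z + tε)* = z̄ + t̄ε) if and only if there exist a complex matrix U with Uᴴ·U = I and a complex Hermitian matrix H (Hᴴ = H) such that M = (I + iε·H)·U, i.e. the significant part of M is U and its infinitesimal part is i·H·U. -/
open DualNumber TrivSqZeroExt Matrix

/-- Componentwise star (conjugation) on dual-complex numbers:
`(z + tε)* = z̄ + t̄ε`. -/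
noncomputable instance : Star ℂ[ε] :=
  ⟨fun w => inl (starRingEnd ℂ w.fst) + (starRingEnd ℂ w.snd) • ε⟩

/-!
Write `M = A + εB`. Since `ε² = 0`, the equation `Mᴴ * M = 1` says that `A` is unitary and that
`Aᴴ * B` is skew-Hermitian. Conjugating by `A`, the latter means that `B * Aᴴ` is skew-Hermitian,
that is, `B * Aᴴ = i H` with `H` Hermitian.
-/

theorem star_mul_mem_skewAdjoint_iff {R : Type*} [Ring R] [StarRing R] {u : R}
    (hu : u ∈ unitary R) {b : R} :
    star u * b ∈ skewAdjoint R ↔ b * star u ∈ skewAdjoint R := by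
  constructor <;> intro h
  · simpa only [← mul_assoc, Unitary.mul_star_self_of_mem hu, one_mul]
      using skewAdjoint.conjugate h u
  · simpa only [mul_assoc, Unitary.star_mul_self_of_mem hu, mul_one]
      using skewAdjoint.conjugate' h u

theorem mem_skewAdjoint_iff_exists_eq_I_smul {V : Type*} [AddCommGroup V] [Module ℂ V]
    [StarAddMonoid V] [StarModule ℂ V] {a : V} :
    a ∈ skewAdjoint V ↔ ∃ h, IsSelfAdjoint h ∧ a = Complex.I • h := by
  constructor
  · intro ha
    exact ⟨skewAdjoint.negISMul ⟨a, ha⟩, (skewAdjoint.negISMul ⟨a, ha⟩).2,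
      (skewAdjoint.I_smul_neg_I ⟨a, ha⟩).symm⟩
  · rintro ⟨h, hh, rfl⟩
    exact Complex.I_smul_mem_skewAdjoint_iff_isSelfAdjoint.mpr hh

theorem star_mul_mem_skewAdjoint_iff_exists_eq_I_smul_mul {A : Type*} [Ring A] [StarRing A]
    [Module ℂ A] [IsScalarTower ℂ A A] [StarModule ℂ A] {u : A} (hu : u ∈ unitary A) {b : A} :
    star u * b ∈ skewAdjoint A ↔ ∃ h, IsSelfAdjoint h ∧ b = Complex.I • (h * u) := by
  have mul_star_eq_iff (c : A) : b * star u = c ↔ b = c * u := by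
    constructor <;> rintro rfl
    · rw [mul_assoc, Unitary.star_mul_self_of_mem hu, mul_one]
    · rw [mul_assoc, Unitary.mul_star_self_of_mem hu, mul_one]
  simp only [star_mul_mem_skewAdjoint_iff hu, mem_skewAdjoint_iff_exists_eq_I_smul,
    mul_star_eq_iff, smul_mul_assoc]

section DualNumberMatrix

variable {l m n R : Type*}

theorem dualNumberMatrix_ext_iff {M N : Matrix m n R[ε]} :
    M = N ↔ M.map fst = N.map fst ∧ M.map snd = N.map snd := by
  simp only [← Matrix.ext_iff, map_apply, TrivSqZeroExt.ext_iff, forall_and]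

theorem dualNumberMatrix_eq_of_inl_add_smul_eps_iff [Semiring R] {M : Matrix m n R[ε]}
    {A B : Matrix m n R} :
    (M = Matrix.of fun i j => inl (A i j) + B i j • ε) ↔ M.map fst = A ∧ M.map snd = B := by
  rw [dualNumberMatrix_ext_iff]
  simp [← Matrix.ext_iff]

theorem map_fst_dualNumberMatrix_mul [Fintype m] [Semiring R] (M : Matrix l m R[ε])
    (N : Matrix m n R[ε]) : (M * N).map fst = M.map fst * N.map fst :=
  Matrix.map_mul (f := (fstHom ℕ R R : R[ε] →+* R))

theorem map_snd_dualNumberMatrix_mul [Fintype m] [Semiring R] (M : Matrix l m R[ε])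
    (N : Matrix m n R[ε]) :
    (M * N).map snd = M.map fst * N.map snd + M.map snd * N.map fst := by
  ext i j
  simp [mul_apply, snd_sum, Finset.sum_add_distrib]

end DualNumberMatrix

theorem dualComplex_fst_star (w : ℂ[ε]) : (star w).fst = star w.fst := by
  change (inl (starRingEnd ℂ w.fst) + (starRingEnd ℂ w.snd) • ε : ℂ[ε]).fst = star w.fst
  simp

theorem dualComplex_snd_star (w : ℂ[ε]) : (star w).snd = star w.snd := by
  change (inl (starRingEnd ℂ w.fst) + (starRingEnd ℂ w.snd) • ε : ℂ[ε]).snd = star w.snd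
  simp

section DualComplexMatrix

variable {m n : Type*}

theorem map_fst_dualComplex_conjTranspose (M : Matrix m n ℂ[ε]) :
    Mᴴ.map fst = (M.map fst)ᴴ :=
  conjTranspose_map fst dualComplex_fst_star

theorem map_snd_dualComplex_conjTranspose (M : Matrix m n ℂ[ε]) :
    Mᴴ.map snd = (M.map snd)ᴴ :=
  conjTranspose_map snd dualComplex_snd_star

variable [Fintype n] [DecidableEq n]

theorem dualComplex_conjTranspose_mul_self_eq_one_iff (M : Matrix n n ℂ[ε]) :
    Mᴴ * M = 1 ↔ M.map fst ∈ unitaryGroup n ℂ ∧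
      star (M.map fst) * M.map snd ∈ skewAdjoint (Matrix n n ℂ) := by
  have map_fst_one : (1 : Matrix n n ℂ[ε]).map fst = 1 := Matrix.map_one fst rfl rfl
  have map_snd_one : (1 : Matrix n n ℂ[ε]).map snd = 0 := by
    ext i j
    by_cases h : i = j <;> simp [h]
  have map_fst_gram : (Mᴴ * M).map fst = star (M.map fst) * M.map fst := by
    rw [map_fst_dualNumberMatrix_mul, map_fst_dualComplex_conjTranspose, star_eq_conjTranspose]
  have map_snd_gram : (Mᴴ * M).map snd =
      star (M.map fst) * M.map snd + star (star (M.map fst) * M.map snd) := by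
    rw [map_snd_dualNumberMatrix_mul, map_fst_dualComplex_conjTranspose,
      map_snd_dualComplex_conjTranspose, star_mul, star_star, star_eq_conjTranspose,
      star_eq_conjTranspose]
  rw [dualNumberMatrix_ext_iff, map_fst_gram, map_snd_gram, map_fst_one, map_snd_one,
    mem_unitaryGroup_iff', skewAdjoint.mem_iff, eq_neg_iff_add_eq_zero, add_comm]

theorem dualComplex_unitary_iff_general (M : Matrix n n ℂ[ε]) :
    Mᴴ * M = 1 ↔
      ∃ U H : Matrix n n ℂ, Uᴴ * U = 1 ∧ Hᴴ = H ∧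
        M = Matrix.of fun i j => inl (U i j) + (Complex.I * (H * U) i j) • ε := by
  have decomposition_iff (U H : Matrix n n ℂ) :
      (M = Matrix.of fun i j => inl (U i j) + (Complex.I * (H * U) i j) • ε) ↔
        M.map fst = U ∧ M.map snd = Complex.I • (H * U) :=
    dualNumberMatrix_eq_of_inl_add_smul_eps_iff
  simp only [decomposition_iff]
  rw [dualComplex_conjTranspose_mul_self_eq_one_iff]
  constructor
  · rintro ⟨hU, hskew⟩
    obtain ⟨H, hH, hB⟩ := (star_mul_mem_skewAdjoint_iff_exists_eq_I_smul_mul hU).mp hskew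
    exact ⟨M.map fst, H, mem_unitaryGroup_iff'.mp hU, hH, rfl, hB⟩
  · rintro ⟨_, H, hU, hH, rfl, hB⟩
    have hU := mem_unitaryGroup_iff'.mpr hU
    exact ⟨hU, (star_mul_mem_skewAdjoint_iff_exists_eq_I_smul_mul hU).mpr ⟨H, hH, hB⟩⟩

end DualComplexMatrix

/-- **Characterization of dual-complex unitaries.**
A square dual-complex matrix `M` satisfies `Mᴴ·M = I` iff there exist a complex
unitary `U` and a complex Hermitian `H` such that `M = U + ε·(i·H·U)`, i.e. the
significant part of `M` is `U` and its infinitesimal part is `i·H·U`. -/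
theorem dualComplex_unitary_iff (n : ℕ) (M : Matrix (Fin n) (Fin n) ℂ[ε]) :
    Mᴴ * M = 1 ↔
      ∃ (U H : Matrix (Fin n) (Fin n) ℂ), Uᴴ * U = 1 ∧ Hᴴ = H ∧
        M = Matrix.of fun i j => inl (U i j) + (Complex.I * (H * U) i j) • ε :=
  dualComplex_unitary_iff_general M
end

section
/- Every dual-complex unitary matrix is unitarily diagonalizable with eigenvalues of the form e^{iθ}(1 + iμε): if U_ε is a square matrix over the dual-complex numbers with U_εᴴ·U_ε = I, then there exist a dual-complex matrix P with Pᴴ·P = I and real numbers θ_j, μ_j such that U_ε = P·D·Pᴴ, where D is the diagonal matrix with j-th diagonal entry e^{iθ_j}·(1 + i·μ_j·ε). -/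
/-!
Write `U = U₀ + U₁ε`, so that `U₀` is unitary and `K = U₀ᴴU₁` is skew-Hermitian. Conjugation by `U₀`
preserves the trace and hence the inner product `tr (XᴴY)` on matrices, so the range and the kernel
of `X ↦ U₀ᴴXU₀ - X` are complementary: `K = U₀ᴴAU₀ - A + S` with `A`, `S` skew-Hermitian and `S`
commuting with `U₀`. Equivalently, `U = (1 + εA) U₀ (1 + εS) (1 + εA)ᴴ`, and a unitary `R`
diagonalizing the commuting normal matrices `U₀` and `S` simultaneously turns this into the
diagonalization of `U` by `P = (1 + εA) R`.
-/

open DualNumber TrivSqZeroExt Matrix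

section SimultaneousDiagonalization

open Module Module.End Unitary
open scoped Function ComplexStarModule

variable {κ ι 𝕜 : Type*} [RCLike 𝕜] [Fintype ι]

theorem exists_orthonormalBasis_forall_apply_eq_smul {E : Type*} [NormedAddCommGroup E]
    [InnerProductSpace 𝕜 E] [FiniteDimensional 𝕜 E] (hE : finrank 𝕜 E = Fintype.card ι)
    {T : κ → E →ₗ[𝕜] E} (hT : ∀ k, (T k).IsSymmetric) (hcomm : Pairwise (Commute on T)) :
    ∃ (b : OrthonormalBasis ι 𝕜 E) (χ : ι → κ → 𝕜), ∀ k j, T k (b j) = χ j k • b j := by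
  classical
  let V : (κ → 𝕜) → Submodule 𝕜 E := fun χ => ⨅ k, eigenspace (T k) (χ k)
  have hV : OrthogonalFamily 𝕜 (fun χ => V χ) fun χ => (V χ).subtypeₗᵢ :=
    LinearMap.IsSymmetric.orthogonalFamily_iInf_eigenspaces hT
  have hint : DirectSum.IsInternal V :=
    LinearMap.IsSymmetric.directSum_isInternal_of_pairwise_commute hT hcomm
  have : Fintype {χ // V χ ≠ ⊥} :=
    (Submodule.finite_ne_bot_of_iSupIndep hint.submodule_iSupIndep).fintype
  have hint' : DirectSum.IsInternal fun χ : {χ // V χ ≠ ⊥} => V χ :=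
    DirectSum.isInternal_ne_bot_iff.mpr hint
  have hV' := hV.comp (Subtype.val_injective (p := fun χ => V χ ≠ ⊥))
  let e : Fin (Fintype.card ι) ≃ ι := (Fintype.equivFin ι).symm
  refine ⟨(hint'.subordinateOrthonormalBasis hE hV').reindex e,
    fun j => (hint'.subordinateOrthonormalBasisIndex hE (e.symm j) hV').1, fun k j => ?_⟩
  have hmem := hint'.subordinateOrthonormalBasis_subordinate hE (e.symm j) hV'
  rw [OrthonormalBasis.reindex_apply]
  exact mem_eigenspace_iff.mp ((Submodule.mem_iInf _).mp hmem k)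

variable [DecidableEq ι]

theorem exists_unitary_forall_isHermitian_eq_conj_diagonal {T : κ → Matrix ι ι 𝕜}
    (hT : ∀ k, (T k).IsHermitian) (hcomm : Pairwise (Commute on T)) :
    ∃ (R : unitaryGroup ι 𝕜) (χ : κ → ι → 𝕜),
      ∀ k, T k = conjStarAlgAut 𝕜 _ R (diagonal (χ k)) := by
  have hsymm (k) : (toEuclideanLin (T k)).IsSymmetric := isSymmetric_toEuclideanLin_iff.mpr (hT k)
  have hcomm' : Pairwise (Commute on fun k => toEuclideanLin (T k)) :=
    fun i j hij => (hcomm hij).map (toLpLinAlgEquiv 2)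
  obtain ⟨b, χ, hb⟩ :=
    exists_orthonormalBasis_forall_apply_eq_smul (E := EuclideanSpace 𝕜 ι) (ι := ι)
      finrank_euclideanSpace hsymm hcomm'
  let R : unitaryGroup ι 𝕜 := ⟨(EuclideanSpace.basisFun ι 𝕜).toBasis.toMatrix b,
    (EuclideanSpace.basisFun ι 𝕜).toMatrix_orthonormalBasis_mem_unitary b⟩
  refine ⟨R, fun k j => χ j k, fun k => ?_⟩
  have hTR : T k * R = R * diagonal fun j => χ j k := by
    ext i j
    have := congr($(hb k j) i)
    rw [mul_diagonal, mul_comm]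
    exact this
  rw [conjStarAlgAut_apply, ← hTR, mul_assoc, mul_star_self_of_mem R.2, mul_one]

theorem commute_realPart_of_isStarNormal {A : Type*} [CStarAlgebra A] {a x : A}
    (ha : IsStarNormal a) (h : Commute a x) : Commute (ℜ a : A) x := by
  rw [realPart_apply_coe]
  exact (h.add_left (ha.commute_star_left h)).smul_left _

theorem commute_imaginaryPart_of_isStarNormal {A : Type*} [CStarAlgebra A] {a x : A}
    (ha : IsStarNormal a) (h : Commute a x) : Commute (ℑ a : A) x := by
  rw [imaginaryPart_apply_coe]
  exact ((h.sub_left (ha.commute_star_left h)).smul_left _).smul_left _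

open scoped Matrix.Norms.L2Operator in
theorem exists_unitary_forall_isStarNormal_eq_conj_diagonal {T : κ → Matrix ι ι ℂ}
    (hT : ∀ k, IsStarNormal (T k)) (hcomm : Pairwise (Commute on T)) :
    ∃ (R : unitaryGroup ι ℂ) (χ : κ → ι → ℂ),
      ∀ k, T k = conjStarAlgAut ℂ _ R (diagonal (χ k)) := by
  have hcomm' (i j) : Commute (T i) (T j) := by
    rcases eq_or_ne i j with rfl | hij
    exacts [.refl _, hcomm hij]
  have hre {i x} : Commute (T i) x → Commute (ℜ (T i) : Matrix ι ι ℂ) x :=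
    commute_realPart_of_isStarNormal (hT i)
  have him {i x} : Commute (T i) x → Commute (ℑ (T i) : Matrix ι ι ℂ) x :=
    commute_imaginaryPart_of_isStarNormal (hT i)
  let S : κ ⊕ κ → Matrix ι ι ℂ := Sum.elim (fun k => ℜ (T k)) (fun k => ℑ (T k))
  have hS : Pairwise (Commute on S) := by
    rintro (i | i) (j | j) -
    · exact hre (hre (hcomm' j i)).symm
    · exact hre (him (hcomm' j i)).symm
    · exact him (hre (hcomm' j i)).symm
    · exact him (him (hcomm' j i)).symm
  obtain ⟨R, χ, hχ⟩ := exists_unitary_forall_isHermitian_eq_conj_diagonal (T := S)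
    (by rintro (k | k) <;> exact Subtype.prop _) hS
  refine ⟨R, fun k => χ (.inl k) + Complex.I • χ (.inr k), fun k => ?_⟩
  calc T k = S (.inl k) + Complex.I • S (.inr k) := (realPart_add_I_smul_imaginaryPart (T k)).symm
    _ = conjStarAlgAut ℂ _ R (diagonal (χ (.inl k)) + Complex.I • diagonal (χ (.inr k))) := by
      rw [map_add, map_smul, ← hχ, ← hχ]
    _ = _ := by rw [← diagonal_smul, diagonal_add]; rfl

end SimultaneousDiagonalization

section Perturbation

open Unitary

theorem conjStarAlgAut_star_eq_self_iff_commute {S R : Type*} [CommSemiring S] [Semiring R]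
    [StarMul R] [Algebra S R] {u : unitary R} {x : R} :
    conjStarAlgAut S R (star u) x = x ↔ Commute (u : R) x := by
  rw [conjStarAlgAut_star_apply, ← (isUnit_coe (U := u)).mul_right_inj, ← mul_assoc, ← mul_assoc,
    mul_star_self_of_mem u.2, one_mul, commute_iff_eq, eq_comm]

variable {ι : Type*} [DecidableEq ι]

theorem diagonal_mem_skewAdjoint_iff {R : Type*} [AddCommGroup R] [StarAddMonoid R] {d : ι → R} :
    diagonal d ∈ skewAdjoint (Matrix ι ι R) ↔ ∀ j, d j ∈ skewAdjoint R := by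
  rw [skewAdjoint.mem_iff, star_eq_conjTranspose, diagonal_conjTranspose, diagonal_neg,
    diagonal_eq_diagonal_iff]
  rfl

variable [Fintype ι]

theorem diagonal_mem_unitary_iff {R : Type*} [Semiring R] [StarRing R] {d : ι → R} :
    diagonal d ∈ unitary (Matrix ι ι R) ↔ ∀ j, d j ∈ unitary R := by
  simp only [mem_iff, star_eq_conjTranspose, diagonal_conjTranspose, diagonal_mul_diagonal,
    diagonal_eq_one, funext_iff, forall_and]
  rfl

open scoped ComplexOrder in
theorem isCompl_range_ker_conj_sub_id {𝕜 : Type*} [RCLike 𝕜] (U : unitaryGroup ι 𝕜) :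
    IsCompl ((conjStarAlgAut ℝ (Matrix ι ι 𝕜) U).toAlgEquiv.toLinearMap - LinearMap.id).range
      ((conjStarAlgAut ℝ _ U).toAlgEquiv.toLinearMap - LinearMap.id).ker := by
  refine (Submodule.isCompl_iff_disjoint _ _ (LinearMap.finrank_range_add_finrank_ker _).ge).mpr ?_
  rw [Submodule.disjoint_def]
  rintro S ⟨A, rfl⟩ hS
  let φ := conjStarAlgAut ℝ (Matrix ι ι 𝕜) U
  change φ A - A = 0
  replace hS : φ (φ A - A) = φ A - A := sub_eq_zero.mp hS
  have htrace (M : Matrix ι ι 𝕜) : (φ M).trace = M.trace := by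
    rw [conjStarAlgAut_apply, trace_mul_cycle, star_mul_self_of_mem U.2, one_mul]
  rw [← trace_conjTranspose_mul_self_eq_zero_iff]
  generalize hX : φ A - A = X at hS ⊢
  calc (Xᴴ * X).trace = (star X * φ A).trace - (star X * A).trace := by
        rw [← trace_sub, ← mul_sub, hX, star_eq_conjTranspose]
    _ = (φ (star X * A)).trace - (star X * A).trace := by rw [map_mul, map_star, hS]
    _ = 0 := by rw [htrace, sub_self]

theorem exists_skewAdjoint_eq_conj_sub_add {𝕜 : Type*} [RCLike 𝕜] (U : unitaryGroup ι 𝕜)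
    (K : skewAdjoint (Matrix ι ι 𝕜)) :
    ∃ A S : skewAdjoint (Matrix ι ι 𝕜), Commute (U : Matrix ι ι 𝕜) S ∧
      (K : Matrix ι ι 𝕜) = star (U : Matrix ι ι 𝕜) * A * U - A + S := by
  let φ := conjStarAlgAut ℝ (Matrix ι ι 𝕜) (star U)
  obtain ⟨_, ⟨A, rfl⟩, S, hS, hAS⟩ := Submodule.mem_sup.mp
    ((isCompl_range_ker_conj_sub_id (star U)).sup_eq_top.ge
      (Submodule.mem_top (x := (K : Matrix ι ι 𝕜))))
  replace hS : φ S = S := sub_eq_zero.mp hS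
  replace hAS : φ A - A + S = K := hAS
  let skew : Matrix ι ι 𝕜 →ₗ[ℝ] skewAdjoint (Matrix ι ι 𝕜) := skewAdjointPart ℝ
  have hφ (M) : φ (skew M) = skew (φ M) := by
    simp only [skew, skewAdjointPart_apply_coe, map_smul, map_sub, map_star]
  have hK : skew K = K := congr($(skewAdjointPart_comp_subtype_skewAdjoint ℝ) K)
  refine ⟨skew A, skew S, ?_, ?_⟩
  · exact (conjStarAlgAut_star_eq_self_iff_commute (S := ℝ)).mp ((hφ S).trans (by rw [hS]))
  · rw [← conjStarAlgAut_star_apply (S := ℝ)]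
    change _ = φ (skew A) - skew A + skew S
    rw [hφ, ← hK, ← hAS, map_add, map_sub]
    rfl

theorem exists_exp_I_mul_eq_of_mem_unitary {z : ℂ} (hz : z ∈ unitary ℂ) :
    ∃ θ : ℝ, Complex.exp (Complex.I * θ) = z := by
  simpa only [mul_comm Complex.I] using
    (Complex.norm_eq_one_iff z).mp (CStarRing.norm_of_mem_unitary hz)

theorem exists_I_mul_eq_of_mem_skewAdjoint {z : ℂ} (hz : z ∈ skewAdjoint ℂ) :
    ∃ μ : ℝ, Complex.I * μ = z := by
  have hre : z.re = 0 := self_eq_neg.mp congr(Complex.re $(skewAdjoint.mem_iff.mp hz))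
  exact ⟨z.im, by simp [Complex.ext_iff, hre]⟩

theorem exists_unitary_diagonalizing_unitary_and_skewAdjoint {U S : Matrix ι ι ℂ}
    (hU : U ∈ unitaryGroup ι ℂ) (hS : S ∈ skewAdjoint (Matrix ι ι ℂ)) (hUS : Commute U S) :
    ∃ (R : unitaryGroup ι ℂ) (θ μ : ι → ℝ),
      U = conjStarAlgAut ℂ _ R (diagonal fun j => Complex.exp (Complex.I * θ j)) ∧
      S = conjStarAlgAut ℂ _ R (diagonal fun j => Complex.I * μ j) := by
  have hnormal : ∀ k, IsStarNormal (![U, S] k) :=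
    Fin.forall_fin_two.mpr ⟨⟨(star_mul_self_of_mem hU).trans (mul_star_self_of_mem hU).symm⟩,
      skewAdjoint.isStarNormal_of_mem hS⟩
  have hcomm : Pairwise (Function.onFun Commute ![U, S]) := by
    intro i j hij
    fin_cases i <;> fin_cases j
    exacts [absurd rfl hij, hUS, hUS.symm, absurd rfl hij]
  obtain ⟨R, χ, hχ⟩ := exists_unitary_forall_isStarNormal_eq_conj_diagonal hnormal hcomm
  let φ := conjStarAlgAut ℂ (Matrix ι ι ℂ) R
  have hUχ : U = φ (diagonal (χ 0)) := hχ 0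
  have hSχ : S = φ (diagonal (χ 1)) := hχ 1
  have hχ₀ : ∀ j, χ 0 j ∈ unitary ℂ := by
    rw [← diagonal_mem_unitary_iff, ← φ.symm_apply_apply (diagonal (χ 0)), ← hUχ]
    exact map_mem φ.symm hU
  have hχ₁ : ∀ j, χ 1 j ∈ skewAdjoint ℂ := by
    rw [← diagonal_mem_skewAdjoint_iff, skewAdjoint.mem_iff]
    refine φ.injective ?_
    change φ (star _) = φ (-_)
    rw [map_star, map_neg, ← hSχ, skewAdjoint.mem_iff.mp hS]
  choose θ hθ using fun j => exists_exp_I_mul_eq_of_mem_unitary (hχ₀ j)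
  choose μ hμ using fun j => exists_I_mul_eq_of_mem_skewAdjoint (hχ₁ j)
  refine ⟨R, θ, μ, ?_, ?_⟩
  · simpa only [hθ] using hUχ
  · simpa only [hμ] using hSχ

theorem exists_firstOrder_diagonalization {U₀ U₁ : Matrix ι ι ℂ} (hU₀ : U₀ ∈ unitaryGroup ι ℂ)
    (hU₁ : U₀ᴴ * U₁ ∈ skewAdjoint (Matrix ι ι ℂ)) :
    ∃ (R : unitaryGroup ι ℂ) (A : skewAdjoint (Matrix ι ι ℂ)) (θ μ : ι → ℝ),
      U₀ = conjStarAlgAut ℂ _ R (diagonal fun j => Complex.exp (Complex.I * θ j)) ∧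
      U₁ = A * U₀ - U₀ * A + conjStarAlgAut ℂ _ R
        (diagonal fun j => Complex.exp (Complex.I * θ j) * (Complex.I * μ j)) := by
  obtain ⟨A, S, hUS, hAS⟩ := exists_skewAdjoint_eq_conj_sub_add ⟨U₀, hU₀⟩ ⟨_, hU₁⟩
  obtain ⟨R, θ, μ, hθ, hμ⟩ := exists_unitary_diagonalizing_unitary_and_skewAdjoint hU₀ S.2 hUS
  refine ⟨R, A, θ, μ, hθ, ?_⟩
  have hU₀' : U₀ * U₀ᴴ = 1 := mul_star_self_of_mem hU₀
  rw [← diagonal_mul_diagonal, map_mul, ← hθ, ← hμ]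
  calc U₁ = U₀ * (U₀ᴴ * U₁) := by rw [← mul_assoc, hU₀', one_mul]
    _ = U₀ * (U₀ᴴ * A * U₀ - A + S) := congrArg (U₀ * ·) hAS
    _ = A * U₀ - U₀ * A + U₀ * S := by
      rw [mul_add, mul_sub, ← mul_assoc, ← mul_assoc, hU₀', one_mul]

end Perturbation

section DualMatrix

variable {l m n R : Type*}

/-- The matrix `A + Bε` over the dual numbers with real part `A` and infinitesimal part `B`, which
splits identities between dual matrices into identities over `R`. -/
def dualMatrix [Zero R] [Add R] (A B : Matrix m n R) : Matrix m n R[ε] :=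
  of fun i j => inl (A i j) + inr (B i j)

theorem exists_eq_dualMatrix [AddZeroClass R] (M : Matrix m n R[ε]) :
    ∃ A B : Matrix m n R, M = dualMatrix A B :=
  ⟨M.map fst, M.map snd, by ext i j <;> simp [dualMatrix]⟩

theorem dualMatrix_inj [AddZeroClass R] {A B C D : Matrix m n R} :
    dualMatrix A B = dualMatrix C D ↔ A = C ∧ B = D := by
  simp only [dualMatrix, ← Matrix.ext_iff, of_apply, TrivSqZeroExt.ext_iff, fst_add, fst_inl,
    fst_inr, snd_add, snd_inl, snd_inr, add_zero, zero_add, forall_and]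

theorem dualMatrix_mul_dualMatrix [Fintype m] [Semiring R] (A B : Matrix l m R)
    (C D : Matrix m n R) :
    dualMatrix A B * dualMatrix C D = dualMatrix (A * C) (A * D + B * C) := by
  ext i j <;>
    simp [dualMatrix, mul_apply, TrivSqZeroExt.fst_sum, TrivSqZeroExt.snd_sum,
      Finset.sum_add_distrib]

theorem dualComplex_star_eq (w : ℂ[ε]) : star w = inl (star w.fst) + inr (star w.snd) := by
  rw [inr_eq_smul_eps]
  rfl

theorem conjTranspose_dualMatrix (A B : Matrix m n ℂ) :
    (dualMatrix A B)ᴴ = dualMatrix Aᴴ Bᴴ := by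
  ext i j <;> simp [dualMatrix, dualComplex_star_eq]

variable [DecidableEq n]

theorem dualMatrix_one_zero [AddMonoidWithOne R] :
    dualMatrix (1 : Matrix n n R) 0 = 1 := by
  ext i j <;> by_cases h : i = j <;> simp [dualMatrix, one_apply, h]

theorem dualMatrix_diagonal [Semiring R] (a b : n → R) :
    dualMatrix (diagonal a) (diagonal fun j => a j * b j) =
      diagonal fun j => inl (a j) * (1 + b j • ε) := by
  ext i j <;> by_cases h : i = j <;> simp [dualMatrix, h]

theorem dualMatrix_conjTranspose_mul_self_eq_one_iff [Fintype n] {A B : Matrix n n ℂ} :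
    (dualMatrix A B)ᴴ * dualMatrix A B = 1 ↔
      A ∈ unitaryGroup n ℂ ∧ Aᴴ * B ∈ skewAdjoint (Matrix n n ℂ) := by
  rw [conjTranspose_dualMatrix, dualMatrix_mul_dualMatrix, ← dualMatrix_one_zero, dualMatrix_inj,
    mem_unitaryGroup_iff', skewAdjoint.mem_iff, star_eq_conjTranspose, star_eq_conjTranspose,
    conjTranspose_mul, conjTranspose_conjTranspose, eq_neg_iff_add_eq_zero, add_comm (Bᴴ * A)]

end DualMatrix

theorem dualComplex_unitary_spectral_general {ι : Type*} [Fintype ι] [DecidableEq ι]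
    (Uε : Matrix ι ι ℂ[ε]) (hU : Uεᴴ * Uε = 1) :
    ∃ (P : Matrix ι ι ℂ[ε]) (θ μ : ι → ℝ),
      Pᴴ * P = 1 ∧
      Uε = P * Matrix.diagonal (fun j =>
        inl (Complex.exp (Complex.I * (θ j))) * (1 + (Complex.I * (μ j)) • ε)) * Pᴴ := by
  obtain ⟨U₀, U₁, rfl⟩ := exists_eq_dualMatrix Uε
  obtain ⟨hU₀, hU₁⟩ := dualMatrix_conjTranspose_mul_self_eq_one_iff.mp hU
  obtain ⟨⟨R, hR⟩, ⟨A, hA⟩, θ, μ, hθ, hμ⟩ := exists_firstOrder_diagonalization hU₀ hU₁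
  have hP : Rᴴ * (A * R) ∈ skewAdjoint (Matrix ι ι ℂ) := by
    rw [← Matrix.mul_assoc]
    exact skewAdjoint.conjugate' hA R
  refine ⟨dualMatrix R (A * R), θ, μ, dualMatrix_conjTranspose_mul_self_eq_one_iff.mpr ⟨hR, hP⟩, ?_⟩
  rw [← dualMatrix_diagonal, conjTranspose_dualMatrix, dualMatrix_mul_dualMatrix,
    dualMatrix_mul_dualMatrix, dualMatrix_inj]
  refine ⟨hθ, hμ.trans ?_⟩
  rw [conjTranspose_mul, ← star_eq_conjTranspose A, skewAdjoint.mem_iff.mp hA, hθ]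
  simp only [Unitary.conjStarAlgAut_apply, star_eq_conjTranspose]
  noncomm_ring

/-- **Spectral theorem for dual-complex unitaries.**
Every dual-complex unitary `U_ε` (i.e. `U_εᴴ·U_ε = I`) is unitarily
diagonalizable with eigenvalues `e^{iθⱼ}·(1 + i·μⱼ·ε)`: there are a
dual-complex matrix `P` with `Pᴴ·P = I` and reals `θⱼ, μⱼ` with
`U_ε = P·D·Pᴴ`, `D` the diagonal matrix of the above eigenvalues. -/
theorem dualComplex_unitary_spectral (n : ℕ) (Uε : Matrix (Fin n) (Fin n) ℂ[ε])
    (hU : Uεᴴ * Uε = 1) :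
    ∃ (P : Matrix (Fin n) (Fin n) ℂ[ε]) (θ μ : Fin n → ℝ),
      Pᴴ * P = 1 ∧
      Uε = P * Matrix.diagonal (fun j =>
        inl (Complex.exp (Complex.I * (θ j))) * (1 + (Complex.I * (μ j)) • ε)) * Pᴴ :=
  dualComplex_unitary_spectral_general Uε hU
end

section
/- (Self-consistency of dual-complex measurement.) Let {M_m} be a finite family of square matrices over the dual-complex numbers with Σₘ M_mᴴ·M_m = I, and let ψ be a dual-complex vector with ⟨ψ, ψ⟩ = 1. Define p(m) = ⟨ψ, M_mᴴ·M_m·ψ⟩. Then Σₘ p(m) = 1, and each p(m) is either exactly 0 or has strictly positive real significant part. -/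
/-! With `φ = M_m ψ`, moving `M_mᴴ` across the inner product gives `p(m) = ⟨φ, φ⟩`. Taking
significant parts is a ring homomorphism that commutes with conjugation, so the significant part of
`⟨φ, φ⟩` is the squared norm of the complex vector `φ₀` of significant parts of `φ`. If `φ₀ ≠ 0`,
this is positive. If `φ₀ = 0`, all entries of `φ` are multiples of `ε`, and `ε² = 0` annihilates
`⟨φ, φ⟩` entirely, dual part included. -/

open DualNumber TrivSqZeroExt Matrix

theorem star_dotProduct_conjTranspose_mul_self_mulVec {R m n : Type*} [NonUnitalSemiring R]
    [StarRing R] [Fintype m] [Fintype n] (A : Matrix m n R) (v : n → R) :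
    star v ⬝ᵥ ((Aᴴ * A) *ᵥ v) = star (A *ᵥ v) ⬝ᵥ (A *ᵥ v) := by
  rw [← mulVec_mulVec, dotProduct_mulVec, star_mulVec]

theorem dotProduct_eq_zero_of_fst_eq_zero {R M n : Type*} [Semiring R] [AddCommMonoid M]
    [Module R M] [Module Rᵐᵒᵖ M] [Fintype n] {u v : n → TrivSqZeroExt R M}
    (hu : ∀ i, (u i).fst = 0) (hv : ∀ i, (v i).fst = 0) : u ⬝ᵥ v = 0 :=
  Finset.sum_eq_zero fun i _ => by ext <;> simp [hu, hv]

namespace DualComplex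

theorem star_def (w : ℂ[ε]) : star w = inl (star w.fst) + star w.snd • ε :=
  rfl

@[simp]
theorem fst_star (w : ℂ[ε]) : (star w).fst = star w.fst := by
  simp [star_def]

@[simp]
theorem snd_star (w : ℂ[ε]) : (star w).snd = star w.snd := by
  simp [star_def]

noncomputable instance : StarRing ℂ[ε] where
  star_involutive w := by ext <;> simp
  star_mul a b := by ext <;> simp [mul_comm, add_comm]
  star_add a b := by ext <;> simp

section InnerProduct

open scoped ComplexOrder

variable {n : Type*} [Fintype n]

theorem fst_star_dotProduct (u v : n → ℂ[ε]) :
    (star u ⬝ᵥ v).fst = star (fst ∘ u) ⬝ᵥ (fst ∘ v) := by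
  simp [dotProduct, fst_sum]

theorem star_dotProduct_self_eq_zero_or_fst_pos (v : n → ℂ[ε]) :
    star v ⬝ᵥ v = 0 ∨ 0 < (star v ⬝ᵥ v).fst := by
  rcases eq_or_ne (fst ∘ v) 0 with hv | hv
  · have hfst : ∀ i, (v i).fst = 0 := congrFun hv
    exact .inl (dotProduct_eq_zero_of_fst_eq_zero (by simp [hfst]) hfst)
  · right
    rw [fst_star_dotProduct]
    exact dotProduct_star_self_pos_iff.mpr hv

end InnerProduct

end DualComplex

open scoped ComplexOrder in
theorem dualComplex_measurement_consistency_general {ι m n : Type*} [Fintype ι] [Fintype m]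
    [Fintype n] [DecidableEq n] (M : ι → Matrix m n ℂ[ε]) (hM : ∑ i, (M i)ᴴ * M i = 1)
    (ψ : n → ℂ[ε]) (hψ : star ψ ⬝ᵥ ψ = 1) :
    ∑ i, star ψ ⬝ᵥ (((M i)ᴴ * M i) *ᵥ ψ) = 1 ∧
      ∀ i, star ψ ⬝ᵥ (((M i)ᴴ * M i) *ᵥ ψ) = 0 ∨
        0 < (star ψ ⬝ᵥ (((M i)ᴴ * M i) *ᵥ ψ)).fst := by
  constructor
  · rw [← dotProduct_sum, ← sum_mulVec, hM, one_mulVec, hψ]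
  · intro i
    rw [star_dotProduct_conjTranspose_mul_self_mulVec]
    exact DualComplex.star_dotProduct_self_eq_zero_or_fst_pos (M i *ᵥ ψ)

/-- **Self-consistency of dual-complex measurement.**
If `{M_m}` satisfies the completeness relation `Σₘ M_mᴴ·M_m = I` and `ψ` is a
dual-complex state (`⟨ψ, ψ⟩ = 1`), then the probabilities
`p(m) = ⟨ψ, M_mᴴ·M_m·ψ⟩` sum to `1`, and each `p(m)` is either exactly `0` or
has strictly positive real significant part. -/
theorem dualComplex_measurement_consistency (n d : ℕ)
    (M : Fin d → Matrix (Fin n) (Fin n) ℂ[ε])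
    (hM : ∑ m, (M m)ᴴ * M m = 1)
    (ψ : Fin n → ℂ[ε]) (hψ : ∑ k, star (ψ k) * ψ k = 1) :
    (∑ m, ∑ k, star (ψ k) * (((M m)ᴴ * M m).mulVec ψ) k) = 1 ∧
      ∀ m, (∑ k, star (ψ k) * (((M m)ᴴ * M m).mulVec ψ) k) = 0 ∨
        ((∑ k, star (ψ k) * (((M m)ᴴ * M m).mulVec ψ) k).fst.im = 0 ∧
          0 < (∑ k, star (ψ k) * (((M m)ᴴ * M m).mulVec ψ) k).fst.re) := by
  obtain ⟨hsum, hdich⟩ := dualComplex_measurement_consistency_general M hM ψ hψ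
  exact ⟨hsum, fun m => (hdich m).imp_right fun hpos =>
    ⟨(Complex.pos_iff.mp hpos).2.symm, (Complex.pos_iff.mp hpos).1⟩⟩
end
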